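/- Let M = p_i^2 p_j^{n_j} p_k^{n_k} with p_i, p_j, p_k distinct primes, and let A ⊕ B = ℤ_M with |A| = p_i p_j p_k. Assume that no divisor m of M with D(M) | m and m ≠ M belongs to Div(B). Suppose x ∈ ℤ_M ∖ A and there exist a, a_j, a_k ∈ A with (a−a_j, M) = (a_k−x, M) = M/p_j and (a−a_k, M) = (a_j−x, M) = M/p_k. Then for every b ∈ B the set A_{x,b} = {a′ ∈ A : (x−a′, M) = (b−b′, M) for some b′ ∈ B} is contained in the line ℓ_i(x); consequently the saturating set A_x = {a′ ∈ A : (x−a′, M) ∈ Div(B)} is contained in ℓ_i(x). -/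

import Mathlib

open Polynomial

/-- The mask polynomial `A(X) = Σ_{a ∈ A} X^a` of a finite subset of `ZMod M`,
using the representatives in `{0, …, M-1}`. -/
noncomputable def maskPoly (M : ℕ) (A : Finset (ZMod M)) : Polynomial ℤ :=
  ∑ a ∈ A, X ^ a.val

/-- `Φ_s | A` : the `s`-th cyclotomic polynomial divides the mask polynomial of `A` in `ℤ[X]`. -/
def cycDvd (M s : ℕ) (A : Finset (ZMod M)) : Prop :=
  cyclotomic s ℤ ∣ maskPoly M A

/-- `A ⊕ B = ℤ_M` : every element of `ℤ_M` has a unique representation `a + b`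
with `a ∈ A` and `b ∈ B`. -/
def IsTiling (M : ℕ) (A B : Set (ZMod M)) : Prop :=
  ∀ z : ZMod M, ∃! ab : ZMod M × ZMod M, ab.1 ∈ A ∧ ab.2 ∈ B ∧ ab.1 + ab.2 = z

/-- The Coven–Meyerowitz property (T2): whenever `s_1, …, s_m` are prime powers dividing `M`,
powers of pairwise distinct primes, with `Φ_{s_t} | A` for each `t`, then `Φ_{s_1 ⋯ s_m} | A`. -/
def SatisfiesT2 (M : ℕ) (A : Finset (ZMod M)) : Prop :=
  ∀ (P : Finset ℕ) (e : ℕ → ℕ), P.Nonempty →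
    (∀ p ∈ P, p.Prime ∧ 1 ≤ e p ∧ p ^ e p ∣ M ∧ cycDvd M (p ^ e p) A) →
    cycDvd M (∏ p ∈ P, p ^ e p) A

/-- The `D`-grid through `x` in `ZMod M` : `Λ(x, D) = {y : D ∣ y - x}`. -/
def gridSet (M : ℕ) (x : ZMod M) (D : ℕ) : Set (ZMod M) :=
  {y : ZMod M | (D : ZMod M) ∣ (y - x)}

/-- `S` is fibered in the `p` direction on scale `M`: every element of `S` has its whole
fiber `Λ(s, M/p)` contained in `S`. -/
def Fibered (M p : ℕ) (S : Set (ZMod M)) : Prop :=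
  ∀ s ∈ S, gridSet M s (M / p) ⊆ S

/-- `Div_N(S)` : the set of values `(s - s', N) = gcd(s - s', N)` for `s, s' ∈ S`. -/
def DivSet (M N : ℕ) (S : Set (ZMod M)) : Set ℕ :=
  {m : ℕ | ∃ s ∈ S, ∃ s' ∈ S, Nat.gcd (s - s').val N = m}

/-! By Tijdeman's theorem a tiling `A ⊕ B = ℤ_M` survives every dilation `B ↦ uB` by a unit, so
`Div(A) ∩ Div(B) = {M}` (Sands). Write `M = p² q^(m+1) r^(n+1)`, where `q = p_j` and `r = p_k`, and
let `b ∈ B`.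

Since `a_j` differs from `x` only in the `r` direction, every `a' ∈ A_{x,b}` agrees modulo
`r^(n+1)` with `x` or with `a_j`: otherwise `a' - a_j` and `a' - x` would have the same greatest
common divisor with `M`. So `A_{x,b}` lies in two planes `mod r^(n+1)` and, symmetrically, in two
planes `mod q^(m+1)`.

Suppose that some `a' ∈ A_{x,b}` is off the plane `x mod r^(n+1)`. Every greatest common divisor
with `M` that is divisible by `q^m r^(n+1)` but not by `p` is then attained by `a' - a_j` or by
`a' - a`, hence not by a difference in `B`. So `B` injects into `ℤ/q^m r^(n+1)`, which forces
`p < r`. As `B` has at most `p` points congruent to `b` modulo `q^m r^n`, some residue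
`z mod r^(n+1)` with `z ≡ b mod r^n` is missed by all of them. Dilate `B` by a unit `u` taking
`b - z` to `x - a_j` modulo `r^(n+1)`: the tiling then yields `a₂ ∈ A` and `b₂ ∈ B` with
`x - a₂ = u (b - b₂)`. Now `a₂ ∈ A_{x,b}`, but if `a₂` lies in the plane of `x` then `b₂ = b` and
`x ∈ A`, and if it lies in the plane of `a_j` then `b₂` is in the missed residue. -/

section Dilation

variable {G : Type*}

/-- The indicator function of `S` as an element of the group algebra `R[G]`, in which a tiling
becomes a factorisation. -/
noncomputable def maskElement (R : Type*) [Semiring R] (S : Finset G) : AddMonoidAlgebra R G :=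
  ∑ s ∈ S, AddMonoidAlgebra.single s 1

section MaskElement

variable {R : Type*} [Semiring R] [Fintype G]

theorem maskElement_univ_coeff (z : G) :
    (maskElement R (Finset.univ : Finset G)).coeff z = 1 := by
  classical
  simp [maskElement, AddMonoidAlgebra.coeff_sum, Finsupp.single_apply]

variable [AddCommGroup G] {A B : Finset G}

theorem maskElement_mul_of_isComplement
    (h : AddSubgroup.IsComplement (A : Set G) (B : Set G)) :
    maskElement R A * maskElement R B = maskElement R Finset.univ := by
  simp only [maskElement, Finset.sum_mul_sum, AddMonoidAlgebra.single_mul_single, mul_one]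
  simp_rw [← Finset.sum_coe_sort A, ← Finset.sum_coe_sort B, ← Fintype.sum_prod_type']
  exact Fintype.sum_bijective _ h _ _ fun _ => rfl

theorem maskElement_univ_mul :
    maskElement R Finset.univ * maskElement R B =
      B.card • maskElement R (Finset.univ : Finset G) := by
  simp only [maskElement, Finset.sum_mul_sum, AddMonoidAlgebra.single_mul_single, mul_one]
  rw [Finset.sum_comm, ← Finset.sum_const]
  exact Finset.sum_congr rfl fun b _ =>
    Fintype.sum_equiv (Equiv.addRight b) _ _ fun _ => rfl

theorem maskElement_univ_mul_pow (n : ℕ) :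
    maskElement R Finset.univ * maskElement R B ^ n =
      B.card ^ n • maskElement R (Finset.univ : Finset G) := by
  induction n with
  | zero => simp
  | succ n ih =>
    rw [pow_succ, ← mul_assoc, ih, smul_mul_assoc, maskElement_univ_mul, smul_smul, pow_succ]

end MaskElement

variable [AddCommGroup G] [Finite G] {A B : Set G}

theorem exists_add_prime_nsmul_eq (h : AddSubgroup.IsComplement A B)
    {p : ℕ} (hp : p.Prime) (hpB : p.Coprime (Nat.card B)) (z : G) :
    ∃ a ∈ A, ∃ b ∈ B, a + p • b = z := by
  -- In characteristic `p`, Frobenius turns `A * B ^ p` into the sum over all `a + p • b`, whereas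
  -- the tiling makes it a nonzero multiple of the sum over the whole group.
  classical
  have := Fintype.ofFinite G
  have : Fact p.Prime := ⟨hp⟩
  have : CharP (AddMonoidAlgebra (ZMod p) G) p := charP_of_injective_algebraMap' (ZMod p) p
  lift A to Finset G using A.toFinite
  lift B to Finset G using B.toFinite
  have frobenius : maskElement (ZMod p) A * maskElement (ZMod p) B ^ p =
      ∑ a ∈ A, ∑ b ∈ B, AddMonoidAlgebra.single (a + p • b) 1 := by
    simp only [maskElement, sum_pow_char p, AddMonoidAlgebra.single_pow, one_pow,
      Finset.sum_mul_sum, AddMonoidAlgebra.single_mul_single, mul_one]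
  have tiling : maskElement (ZMod p) A * maskElement (ZMod p) B ^ p =
      B.card ^ (p - 1) • maskElement (ZMod p) Finset.univ := by
    rw [← mul_pow_sub_one hp.ne_zero, ← mul_assoc, maskElement_mul_of_isComplement h,
      maskElement_univ_mul_pow]
  by_contra! hne
  have coeff_eq_zero := congrArg (fun f => f.coeff z) (tiling.symm.trans frobenius)
  simp only [AddMonoidAlgebra.coeff_smul, AddMonoidAlgebra.coeff_sum, Finsupp.smul_apply,
    Finsupp.finsetSum_apply, AddMonoidAlgebra.coeff_single, maskElement_univ_coeff, nsmul_one]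
    at coeff_eq_zero
  rw [Finset.sum_eq_zero fun a ha => Finset.sum_eq_zero fun b hb =>
    Finsupp.single_eq_of_ne' (hne a ha b hb), ZMod.natCast_eq_zero_iff] at coeff_eq_zero
  have hpB' : p ∣ Nat.card (B : Set G) := by
    simpa using hp.dvd_of_dvd_pow coeff_eq_zero
  exact hp.coprime_iff_not_dvd.1 hpB hpB'

theorem isComplement_prime_nsmul (h : AddSubgroup.IsComplement A B)
    {p : ℕ} (hp : p.Prime) (hpB : p.Coprime (Nat.card B)) :
    AddSubgroup.IsComplement A ((p • ·) '' B) := by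
  refine Function.Surjective.bijective_of_nat_card_le (fun z => ?_) ?_
  · obtain ⟨a, ha, b, hb, hz⟩ := exists_add_prime_nsmul_eq h hp hpB z
    exact ⟨(⟨a, ha⟩, ⟨p • b, b, hb, rfl⟩), hz⟩
  · rw [← h.card_mul_card, Nat.card_prod]
    exact Nat.mul_le_mul_left _ (Set.ncard_image_le B.toFinite)

theorem card_eq_of_isComplement {B' : Set G} (h : AddSubgroup.IsComplement A B)
    (h' : AddSubgroup.IsComplement A B') : Nat.card B = Nat.card B' := by
  have := h.nonempty_left.to_subtype
  exact Nat.eq_of_mul_eq_mul_left Nat.card_pos (h.card_mul_card.trans h'.card_mul_card.symm)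

/-- Tijdeman's theorem. -/
theorem isComplement_nsmul (h : AddSubgroup.IsComplement A B)
    {n : ℕ} (hn : n.Coprime (Nat.card B)) : AddSubgroup.IsComplement A ((n • ·) '' B) := by
  induction n using induction_on_primes generalizing B with
  | zero =>
    obtain ⟨b, rfl⟩ := Set.ncard_eq_one.1 ((Nat.coprime_zero_left _).1 hn)
    rw [AddSubgroup.isComplement_singleton_right] at h
    subst h
    simp [AddSubgroup.isComplement_singleton_right]
  | one => simpa using h
  | prime_mul p n hp ih =>
    have hpB := isComplement_prime_nsmul h hp hn.coprime_mul_right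
    have := ih hpB (card_eq_of_isComplement h hpB ▸ hn.coprime_mul_left)
    simpa only [Set.image_image, mul_nsmul] using this

end Dilation

section Residues

variable {M d : ℕ} {y z : ZMod M}

theorem gcd_val_units_mul (u : (ZMod M)ˣ) (y : ZMod M) :
    Nat.gcd (u * y : ZMod M).val M = Nat.gcd y.val M := by
  rw [ZMod.val_mul, (Nat.mod_modEq _ _).gcd_eq]
  exact Nat.Coprime.gcd_mul_left_cancel _ (ZMod.val_coe_unit_coprime u)

theorem exists_units_eq_mul (h : Nat.gcd y.val M = Nat.gcd z.val M) :
    ∃ u : (ZMod M)ˣ, y = u * z := by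
  obtain ⟨d, hd, _, ⟨u, rfl⟩, rfl⟩ := ZMod.eq_unit_mul_divisor y
  obtain ⟨e, he, _, ⟨v, rfl⟩, rfl⟩ := ZMod.eq_unit_mul_divisor z
  have hde : d = e := by
    simpa only [gcd_val_units_mul, ZMod.val_natCast, (Nat.mod_modEq _ _).gcd_eq,
      Nat.gcd_eq_left hd, Nat.gcd_eq_left he] using h
  refine ⟨u * v⁻¹, ?_⟩
  rw [hde, Units.val_mul, mul_assoc, Units.inv_mul_cancel_left]

variable [NeZero M]

theorem natCast_dvd_iff_dvd_val (hd : d ∣ M) : (d : ZMod M) ∣ y ↔ d ∣ y.val := by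
  constructor
  · rintro ⟨c, rfl⟩
    rw [ZMod.val_mul, Nat.dvd_mod_iff hd, ZMod.val_natCast]
    exact ((Nat.dvd_mod_iff hd).2 dvd_rfl).mul_right _
  · intro h
    simpa using Nat.cast_dvd_cast (α := ZMod M) h

theorem castHom_eq_zero_iff_dvd (hd : d ∣ M) :
    ZMod.castHom hd (ZMod d) y = 0 ↔ (d : ZMod M) ∣ y := by
  rw [natCast_dvd_iff_dvd_val hd, ← ZMod.natCast_eq_zero_iff, ZMod.natCast_val, ZMod.castHom_apply]

theorem natCast_dvd_sub_iff (hd : d ∣ M) :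
    (d : ZMod M) ∣ y - z ↔ ZMod.castHom hd (ZMod d) y = ZMod.castHom hd (ZMod d) z := by
  rw [← castHom_eq_zero_iff_dvd hd, map_sub, sub_eq_zero]

theorem val_castHom (hd : d ∣ M) (y : ZMod M) : (ZMod.castHom hd (ZMod d) y).val = y.val % d := by
  rw [ZMod.castHom_apply, ← ZMod.natCast_val, ZMod.val_natCast]

theorem gcd_val_eq_of_dvd_sub (hd : d ∣ M) (h : (d : ZMod M) ∣ y - z) :
    Nat.gcd y.val d = Nat.gcd z.val d := by
  have hmod : y.val % d = z.val % d := by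
    rw [← val_castHom hd, ← val_castHom hd, (natCast_dvd_sub_iff hd).1 h]
  exact Nat.ModEq.gcd_eq hmod

theorem exists_units_dvd_sub_mul (hd : d ∣ M) (h : Nat.gcd y.val d = Nat.gcd z.val d) :
    ∃ u : (ZMod M)ˣ, (d : ZMod M) ∣ y - u * z := by
  have : NeZero d := ⟨ne_zero_of_dvd_ne_zero (NeZero.ne M) hd⟩
  obtain ⟨v, hv⟩ : ∃ v : (ZMod d)ˣ,
      ZMod.castHom hd (ZMod d) y = v * ZMod.castHom hd (ZMod d) z := by
    refine exists_units_eq_mul ?_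
    rwa [val_castHom, val_castHom, (Nat.mod_modEq _ _).gcd_eq, (Nat.mod_modEq _ _).gcd_eq]
  obtain ⟨u, rfl⟩ := ZMod.unitsMap_surjective hd v
  refine ⟨u, (natCast_dvd_sub_iff hd).2 ?_⟩
  rw [hv, map_mul]
  rfl

end Residues

section PrimePower

variable {K r n : ℕ}

theorem gcd_prime_pow_succ_of_not_dvd (hr : r.Prime) {y : ℕ} (h : ¬ r ^ (n + 1) ∣ y) :
    Nat.gcd y (r ^ (n + 1)) = Nat.gcd y (r ^ n) := by
  refine Nat.dvd_antisymm (Nat.dvd_gcd (Nat.gcd_dvd_left _ _) ?_)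
    (Nat.gcd_dvd_gcd_of_dvd_right _ (pow_dvd_pow r n.le_succ))
  obtain ⟨i, hi, e⟩ := (Nat.dvd_prime_pow hr).1 (Nat.gcd_dvd_right y (r ^ (n + 1)))
  have hne : i ≠ n + 1 := by
    rintro rfl
    exact h (e ▸ Nat.gcd_dvd_left _ _)
  exact e ▸ pow_dvd_pow r (by omega)

theorem gcd_mul_prime_pow_succ_congr (hr : r.Prime) (hK : K.Coprime r) {y z : ℕ}
    (hgcd : Nat.gcd y (K * r ^ n) = Nat.gcd z (K * r ^ n))
    (hdvd : r ^ (n + 1) ∣ y ↔ r ^ (n + 1) ∣ z) :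
    Nat.gcd y (K * r ^ (n + 1)) = Nat.gcd z (K * r ^ (n + 1)) := by
  by_cases hy : r ^ (n + 1) ∣ y
  · have hgcdK : Nat.gcd y K = Nat.gcd z K := by
      have := congrArg (Nat.gcd · K) hgcd
      simpa only [Nat.gcd_assoc, Nat.gcd_mul_right_left] using this
    rw [(hK.pow_right _).gcd_mul, (hK.pow_right _).gcd_mul, hgcdK, Nat.gcd_eq_right hy,
      Nat.gcd_eq_right (hdvd.1 hy)]
  · rw [(hK.pow_right _).gcd_mul, (hK.pow_right _).gcd_mul, gcd_prime_pow_succ_of_not_dvd hr hy,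
      gcd_prime_pow_succ_of_not_dvd hr (mt hdvd.2 hy), ← (hK.pow_right _).gcd_mul,
      ← (hK.pow_right _).gcd_mul, hgcd]

end PrimePower

section Grid

variable {M d e : ℕ} {x y z : ZMod M}

theorem mem_gridSet_iff : y ∈ gridSet M x d ↔ (d : ZMod M) ∣ y - x := Iff.rfl

theorem mem_gridSet_self (x : ZMod M) (d : ℕ) : x ∈ gridSet M x d := by
  simp [mem_gridSet_iff]

theorem mem_gridSet_comm : y ∈ gridSet M x d ↔ x ∈ gridSet M y d := by
  rw [mem_gridSet_iff, mem_gridSet_iff, ← neg_sub, dvd_neg]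

theorem mem_gridSet_trans (hzy : z ∈ gridSet M y d) (hyx : y ∈ gridSet M x d) :
    z ∈ gridSet M x d := by
  simpa [mem_gridSet_iff] using dvd_add hzy hyx

theorem gridSet_subset_of_dvd (h : d ∣ e) : gridSet M x e ⊆ gridSet M x d :=
  fun _ => (Nat.cast_dvd_cast h).trans

theorem mem_gridSet_mul [NeZero M] (hde : d * e ∣ M) (hc : d.Coprime e) (hd : y ∈ gridSet M x d)
    (he : y ∈ gridSet M x e) : y ∈ gridSet M x (d * e) := by
  rw [mem_gridSet_iff, natCast_dvd_iff_dvd_val (dvd_of_mul_right_dvd hde)] at hd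
  rw [mem_gridSet_iff, natCast_dvd_iff_dvd_val (dvd_of_mul_left_dvd hde)] at he
  exact (natCast_dvd_iff_dvd_val hde).2 (hc.mul_dvd_of_dvd_of_dvd hd he)

theorem mem_gridSet_gcd [NeZero M] (x y : ZMod M) : y ∈ gridSet M x (Nat.gcd (y - x).val M) :=
  (natCast_dvd_iff_dvd_val (Nat.gcd_dvd_right _ _)).2 (Nat.gcd_dvd_left _ _)

theorem mem_gridSet_self_iff_eq : y ∈ gridSet M x M ↔ y = x := by
  simp [mem_gridSet_iff, sub_eq_zero]

theorem mem_gridSet_iff_dvd_gcd [NeZero M] (hd : d ∣ M) :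
    y ∈ gridSet M x d ↔ d ∣ Nat.gcd (y - x).val M := by
  rw [mem_gridSet_iff, natCast_dvd_iff_dvd_val hd, Nat.dvd_gcd_iff, and_iff_left hd]

theorem mem_gridSet_iff_of_gcd_eq [NeZero M] (hd : d ∣ M) {w : ZMod M}
    (h : Nat.gcd (y - x).val M = Nat.gcd (z - w).val M) :
    y ∈ gridSet M x d ↔ z ∈ gridSet M w d := by
  rw [mem_gridSet_iff_dvd_gcd hd, mem_gridSet_iff_dvd_gcd hd, h]

theorem notMem_gridSet_of_gcd_eq_div [NeZero M] {K r n : ℕ} (hr : r.Prime) (hK : K.Coprime r)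
    (hM : M = K * r ^ (n + 1)) (h : Nat.gcd (y - x).val M = M / r) :
    y ∉ gridSet M x (r ^ (n + 1)) := by
  intro hy
  have hrM : r ^ (n + 1) ∣ Nat.gcd (y - x).val M :=
    Nat.dvd_gcd ((natCast_dvd_iff_dvd_val (hM ▸ dvd_mul_left _ _)).1 hy) (hM ▸ dvd_mul_left _ _)
  rw [h, hM, pow_succ', mul_left_comm, Nat.mul_div_cancel_left _ hr.pos,
    Nat.mul_dvd_mul_iff_right (pow_pos hr.pos n)] at hrM
  exact hr.one_lt.ne' (hK.symm.eq_one_of_dvd hrM)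

theorem gcd_val_sub_congr [NeZero M] {K r n : ℕ} (hr : r.Prime) (hK : K.Coprime r)
    (hM : M = K * r ^ (n + 1)) {w : ZMod M}
    (hgcd : Nat.gcd (y - x).val (K * r ^ n) = Nat.gcd (z - w).val (K * r ^ n))
    (hmem : y ∈ gridSet M x (r ^ (n + 1)) ↔ z ∈ gridSet M w (r ^ (n + 1))) :
    Nat.gcd (y - x).val M = Nat.gcd (z - w).val M := by
  have hrM : r ^ (n + 1) ∣ M := hM ▸ dvd_mul_left _ _
  rw [mem_gridSet_iff, mem_gridSet_iff, natCast_dvd_iff_dvd_val hrM,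
    natCast_dvd_iff_dvd_val hrM] at hmem
  simpa only [← hM] using gcd_mul_prime_pow_succ_congr hr hK hgcd hmem

theorem exists_units_dvd_sub_mul_of_mem_gridSet [NeZero M] {r n : ℕ} (hr : r.Prime)
    (hrM : r ^ (n + 1) ∣ M) {w : ZMod M} (hy : y ∈ gridSet M x (r ^ n))
    (hy' : y ∉ gridSet M x (r ^ (n + 1))) (hz : z ∈ gridSet M w (r ^ n))
    (hz' : z ∉ gridSet M w (r ^ (n + 1))) :
    ∃ u : (ZMod M)ˣ, ((r ^ (n + 1) : ℕ) : ZMod M) ∣ (y - x) - u * (z - w) := by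
  have hrM' : r ^ n ∣ M := (pow_dvd_pow r n.le_succ).trans hrM
  rw [mem_gridSet_iff, natCast_dvd_iff_dvd_val hrM] at hy' hz'
  rw [mem_gridSet_iff, natCast_dvd_iff_dvd_val hrM'] at hy hz
  refine exists_units_dvd_sub_mul hrM ?_
  rw [gcd_prime_pow_succ_of_not_dvd hr hy', gcd_prime_pow_succ_of_not_dvd hr hz',
    Nat.gcd_eq_right hy, Nat.gcd_eq_right hz]

/-- A set meeting every `N`-grid in at most one point. -/
def GridSeparated (M N : ℕ) (S : Set (ZMod M)) : Prop :=
  ∀ s ∈ S, ∀ s' ∈ S, s ∈ gridSet M s' N → s = s'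

theorem GridSeparated.ncard_le [NeZero M] {N : ℕ} (hN : N ∣ M) {S : Set (ZMod M)}
    (hS : GridSeparated M N S) : S.ncard ≤ N := by
  have : NeZero N := ⟨ne_zero_of_dvd_ne_zero (NeZero.ne M) hN⟩
  calc S.ncard ≤ (Set.univ : Set (ZMod N)).ncard :=
        Set.ncard_le_ncard_of_injOn (ZMod.castHom hN (ZMod N)) (fun _ _ => Set.mem_univ _)
          fun s hs s' hs' h => hS s hs s' hs' ((natCast_dvd_sub_iff hN).2 h)
    _ = N := by rw [Set.ncard_univ, Nat.card_zmod]

theorem GridSeparated.inter_gridSet [NeZero M] (hde : d * e ∣ M) (hc : d.Coprime e)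
    {S : Set (ZMod M)} (hS : GridSeparated M (d * e) S) (x : ZMod M) :
    GridSeparated M d (S ∩ gridSet M x e) :=
  fun s hs s' hs' h => hS s hs.1 s' hs'.1
    (mem_gridSet_mul hde hc h (mem_gridSet_trans hs.2 (mem_gridSet_comm.1 hs'.2)))

theorem gridSeparated_of_forall_notMem_divSet [NeZero M] (hd : d ∣ M) {S : Set (ZMod M)}
    (hS : ∀ t, d ∣ t → t ∣ M → t ≠ M → t ∉ DivSet M M S) : GridSeparated M d S := by
  intro s hs s' hs' hmem
  by_contra hne
  refine hS _ ((mem_gridSet_iff_dvd_gcd hd).1 hmem) (Nat.gcd_dvd_right _ _) (fun hgcd => hne ?_)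
    ⟨s, hs, s', hs', rfl⟩
  rw [← mem_gridSet_self_iff_eq, mem_gridSet_iff_dvd_gcd dvd_rfl, hgcd]

theorem exists_mem_gridSet_forall_notMem [NeZero M] {r : ℕ} (hrd : d * r ∣ M) {S : Set (ZMod M)}
    (hS : S.ncard < r) (w : ZMod M) :
    ∃ z ∈ gridSet M w d, ∀ s ∈ S, s ∉ gridSet M z (d * r) := by
  by_contra! h
  have meets : ∀ t : ℕ, ∃ s ∈ S, s ∈ gridSet M (w + d * t) (d * r) := fun t =>
    h _ (by simp [mem_gridSet_iff])
  choose f hfS hf using meets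
  have hd : d ≠ 0 := left_ne_zero_of_mul (ne_zero_of_dvd_ne_zero (NeZero.ne M) hrd)
  refine hS.not_ge (Set.le_ncard_of_inj_on_range f (fun t _ => hfS t) fun t ht t' ht' hff => ?_)
  have hgrid : w + d * t ∈ gridSet M (w + d * t') (d * r) :=
    mem_gridSet_trans (mem_gridSet_comm.1 (hf t)) (hff ▸ hf t')
  rw [mem_gridSet_iff, natCast_dvd_sub_iff hrd] at hgrid
  simp only [map_add, map_natCast, add_right_inj, ← Nat.cast_mul,
    ZMod.natCast_eq_natCast_iff] at hgrid
  exact (Nat.ModEq.mul_left_cancel' hd hgrid).eq_of_lt_of_lt ht ht'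

end Grid

section Tiling

variable {M : ℕ} {A B : Set (ZMod M)}

theorem isTiling_iff_isComplement : IsTiling M A B ↔ AddSubgroup.IsComplement A B := by
  simp only [IsTiling, AddSubgroup.isComplement_iff_existsUnique]
  refine forall_congr' fun z => ⟨?_, ?_⟩
  · rintro ⟨⟨a, b⟩, ⟨ha, hb, hz⟩, huniq⟩
    refine ⟨(⟨a, ha⟩, ⟨b, hb⟩), hz, fun y hy => ?_⟩
    have := huniq (y.1, y.2) ⟨y.1.2, y.2.2, hy⟩
    grind
  · rintro ⟨⟨a, b⟩, hz, huniq⟩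
    refine ⟨(a, b), ⟨a.2, b.2, hz⟩, fun y hy => ?_⟩
    have := huniq (⟨y.1, hy.1⟩, ⟨y.2, hy.2.1⟩) hy.2.2
    grind

variable [NeZero M]

theorem IsTiling.ncard_mul_ncard (h : IsTiling M A B) : A.ncard * B.ncard = M := by
  simpa using (isTiling_iff_isComplement.1 h).card_mul_card

theorem IsTiling.units_mul (h : IsTiling M A B) (u : (ZMod M)ˣ) :
    IsTiling M A ((u * · : ZMod M → ZMod M) '' B) := by
  have hu : (u : ZMod M).val.Coprime (Nat.card B) :=
    (ZMod.val_coe_unit_coprime u).coprime_dvd_right ⟨A.ncard, by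
      rw [mul_comm]; exact h.ncard_mul_ncard.symm⟩
  simpa [isTiling_iff_isComplement] using isComplement_nsmul (isTiling_iff_isComplement.1 h) hu

theorem IsTiling.exists_sub_eq_units_mul (h : IsTiling M A B) (u : (ZMod M)ˣ) (x b : ZMod M) :
    ∃ a ∈ A, ∃ b' ∈ B, x - a = u * (b - b') := by
  obtain ⟨⟨a, _⟩, ⟨ha, ⟨b', hb', rfl⟩, hsum⟩, -⟩ := h.units_mul (-u) (x - u * b)
  refine ⟨a, ha, b', hb', ?_⟩
  simp only [Units.val_neg] at hsum
  linear_combination -hsum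

/-- Sands' theorem. -/
theorem IsTiling.eq_of_gcd_sub_eq (h : IsTiling M A B) {a a' b b' : ZMod M} (ha : a ∈ A)
    (ha' : a' ∈ A) (hb : b ∈ B) (hb' : b' ∈ B)
    (hgcd : Nat.gcd (a - a').val M = Nat.gcd (b - b').val M) : a = a' := by
  obtain ⟨u, hu⟩ := exists_units_eq_mul hgcd
  have hsum : a + u * b' = a' + u * b := by linear_combination hu
  exact congrArg Prod.fst <| (h.units_mul u (a' + u * b)).unique
    (y₁ := (a, u * b')) (y₂ := (a', u * b)) ⟨ha, ⟨b', hb', rfl⟩, hsum⟩ ⟨ha', ⟨b, hb, rfl⟩, rfl⟩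

/-- The part `A_{x,b}` of the saturating set of `x`: the `a' ∈ A` whose difference from `x` has the
same greatest common divisor with `M` as a difference from `b` inside `B`. -/
def saturatingSet (A B : Set (ZMod M)) (x b : ZMod M) : Set (ZMod M) :=
  {a' | a' ∈ A ∧ ∃ b' ∈ B, Nat.gcd (x - a').val M = Nat.gcd (b - b').val M}

theorem notMem_gridSet_of_mem_saturatingSet {N : ℕ} (hN : N ∣ M) (hB : GridSeparated M N B)
    {x a' b : ZMod M} (hx : x ∉ A) (hb : b ∈ B) (ha' : a' ∈ saturatingSet A B x b) :
    a' ∉ gridSet M x N := by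
  intro hmem
  obtain ⟨haA, b', hb', hgcd⟩ := ha'
  have hbb' : b = b' :=
    hB b hb b' hb' ((mem_gridSet_iff_of_gcd_eq hN hgcd).1 (mem_gridSet_comm.1 hmem))
  have hxa : x = a' := mem_gridSet_self_iff_eq.1 <|
    (mem_gridSet_iff_of_gcd_eq dvd_rfl hgcd).2 (mem_gridSet_self_iff_eq.2 hbb')
  exact hx (hxa ▸ haA)

section Bispan

variable {K r n : ℕ} {x b c : ZMod M}

theorem saturatingSet_subset_union (hr : r.Prime) (hK : K.Coprime r) (hM : M = K * r ^ (n + 1))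
    (h : IsTiling M A B) (hb : b ∈ B) (hc : c ∈ A) (hcx : c ∈ gridSet M x (K * r ^ n)) :
    saturatingSet A B x b ⊆ gridSet M x (r ^ (n + 1)) ∪ gridSet M c (r ^ (n + 1)) := by
  rintro a' ⟨ha', b', hb', hgcd⟩
  by_contra hcon
  rw [Set.mem_union, mem_gridSet_comm, @mem_gridSet_comm _ _ c, not_or] at hcon
  have hlow : Nat.gcd (c - a').val (K * r ^ n) = Nat.gcd (x - a').val (K * r ^ n) := by
    refine gcd_val_eq_of_dvd_sub ⟨r, by rw [hM]; ring⟩ ?_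
    rwa [sub_sub_sub_cancel_right]
  have hgcd' : Nat.gcd (c - a').val M = Nat.gcd (x - a').val M :=
    gcd_val_sub_congr hr hK hM hlow (iff_of_false hcon.2 hcon.1)
  have hca : c = a' := h.eq_of_gcd_sub_eq hc ha' hb hb' (hgcd'.trans hgcd)
  exact hcon.2 (hca ▸ mem_gridSet_self _ _)

theorem saturatingSet_subset_gridSet_pow (hr : r.Prime) (hK : K.Coprime r)
    (hM : M = K * r ^ (n + 1)) (h : IsTiling M A B) (hb : b ∈ B) (hc : c ∈ A)
    (hcx : c ∈ gridSet M x (K * r ^ n)) : saturatingSet A B x b ⊆ gridSet M x (r ^ n) := by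
  have hrr : gridSet M x (r ^ (n + 1)) ⊆ gridSet M x (r ^ n) :=
    gridSet_subset_of_dvd (pow_dvd_pow r n.le_succ)
  intro a' ha'
  rcases saturatingSet_subset_union hr hK hM h hb hc hcx ha' with hx | hc
  · exact hrr hx
  · exact mem_gridSet_trans (gridSet_subset_of_dvd (pow_dvd_pow r n.le_succ) hc)
      (gridSet_subset_of_dvd (dvd_mul_left _ _) hcx)

end Bispan

end Tiling

/-- The modulus `M = p² q^(m+1) r^(n+1)` with `p`, `q`, `r` distinct primes. The two exponents
that are positive but otherwise arbitrary are written as successors, so that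
`D(M) = p * (q ^ m * r ^ n)` needs no subtraction. -/
structure ThreePrimeModulus (M p q r m n : ℕ) : Prop where
  prime_p : p.Prime
  prime_q : q.Prime
  prime_r : r.Prime
  p_ne_q : p ≠ q
  p_ne_r : p ≠ r
  q_ne_r : q ≠ r
  eq_mul : M = p ^ 2 * q ^ (m + 1) * r ^ (n + 1)

namespace ThreePrimeModulus

variable {M p q r m n : ℕ}

theorem swap (hM : ThreePrimeModulus M p q r m n) : ThreePrimeModulus M p r q n m :=
  ⟨hM.prime_p, hM.prime_r, hM.prime_q, hM.p_ne_r, hM.p_ne_q, hM.q_ne_r.symm, by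
    rw [hM.eq_mul]; ring⟩

theorem ne_zero (hM : ThreePrimeModulus M p q r m n) : M ≠ 0 := by
  have := hM.prime_p.ne_zero
  have := hM.prime_q.ne_zero
  have := hM.prime_r.ne_zero
  rw [hM.eq_mul]
  positivity

theorem coprime_p_q (hM : ThreePrimeModulus M p q r m n) : p.Coprime q :=
  (Nat.coprime_primes hM.prime_p hM.prime_q).2 hM.p_ne_q

theorem coprime_p_r (hM : ThreePrimeModulus M p q r m n) : p.Coprime r :=
  hM.swap.coprime_p_q

theorem coprime_q_r (hM : ThreePrimeModulus M p q r m n) : q.Coprime r :=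
  (Nat.coprime_primes hM.prime_q hM.prime_r).2 hM.q_ne_r

theorem coprime_mul_r (hM : ThreePrimeModulus M p q r m n) :
    (p ^ 2 * q ^ (m + 1)).Coprime r :=
  (hM.coprime_p_r.pow_left _).mul_left (hM.coprime_q_r.pow_left _)

theorem coprime_p_mul (hM : ThreePrimeModulus M p q r m n) (i j : ℕ) :
    p.Coprime (q ^ i * r ^ j) :=
  (hM.coprime_p_q.pow_right i).mul_right (hM.coprime_p_r.pow_right j)

theorem mul_dvd (hM : ThreePrimeModulus M p q r m n) {k i j : ℕ} (hk : k ≤ 2) (hi : i ≤ m + 1)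
    (hj : j ≤ n + 1) : p ^ k * (q ^ i * r ^ j) ∣ M := by
  rw [hM.eq_mul, ← mul_assoc]
  exact mul_dvd_mul (mul_dvd_mul (pow_dvd_pow p hk) (pow_dvd_pow q hi)) (pow_dvd_pow r hj)

theorem p_mul_dvd (hM : ThreePrimeModulus M p q r m n) : p * (q ^ m * r ^ n) ∣ M := by
  simpa using hM.mul_dvd one_le_two m.le_succ n.le_succ

theorem div_r (hM : ThreePrimeModulus M p q r m n) :
    M / r = p ^ 2 * q ^ (m + 1) * r ^ n := by
  rw [hM.eq_mul, pow_succ r, ← mul_assoc, Nat.mul_div_cancel _ hM.prime_r.pos]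

theorem div_p_sq (hM : ThreePrimeModulus M p q r m n) :
    M / p ^ 2 = q ^ (m + 1) * r ^ (n + 1) := by
  rw [hM.eq_mul, mul_assoc, Nat.mul_div_cancel_left _ (pow_pos hM.prime_p.pos 2)]

theorem mem_gridSet_mul_pow [NeZero M] (hM : ThreePrimeModulus M p q r m n) {x y : ZMod M}
    {i j : ℕ} (hi : i ≤ m + 1) (hj : j ≤ n + 1) (hq : y ∈ gridSet M x (q ^ i))
    (hr : y ∈ gridSet M x (r ^ j)) : y ∈ gridSet M x (q ^ i * r ^ j) :=
  mem_gridSet_mul (dvd_of_mul_left_dvd (hM.mul_dvd zero_le_two hi hj))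
    (hM.coprime_q_r.pow _ _) hq hr

theorem gcd_eq_of_mem_gridSet [NeZero M] (hM : ThreePrimeModulus M p q r m n) {x y : ZMod M}
    (hy : y ∈ gridSet M x (q ^ m * r ^ (n + 1))) (hp : y ∉ gridSet M x p) :
    Nat.gcd (y - x).val (p ^ 2 * r ^ (n + 1) * q ^ m) = q ^ m * r ^ (n + 1) := by
  have hdvd := (natCast_dvd_iff_dvd_val
    (dvd_of_mul_left_dvd (hM.mul_dvd le_rfl m.le_succ le_rfl))).1 hy
  rw [mem_gridSet_iff, natCast_dvd_iff_dvd_val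
    (dvd_of_mul_right_dvd hM.p_mul_dvd), ← hM.prime_p.coprime_iff_not_dvd] at hp
  rw [mul_assoc, mul_comm (r ^ _), (hp.pow_left 2).gcd_mul_left_cancel_right _]
  exact Nat.gcd_eq_right hdvd

theorem gcd_val_sub_eq [NeZero M] (hM : ThreePrimeModulus M p q r m n) {x y z w : ZMod M}
    (hy : y ∈ gridSet M x (q ^ m * r ^ (n + 1))) (hyp : y ∉ gridSet M x p)
    (hz : z ∈ gridSet M w (q ^ m * r ^ (n + 1))) (hzp : z ∉ gridSet M w p)
    (hq : y ∈ gridSet M x (q ^ (m + 1)) ↔ z ∈ gridSet M w (q ^ (m + 1))) :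
    Nat.gcd (y - x).val M = Nat.gcd (z - w).val M :=
  gcd_val_sub_congr hM.prime_q hM.swap.coprime_mul_r hM.swap.eq_mul
    (by rw [hM.gcd_eq_of_mem_gridSet hy hyp, hM.gcd_eq_of_mem_gridSet hz hzp]) hq

theorem ncard_right [NeZero M] (hM : ThreePrimeModulus M p q r m n) {A B : Set (ZMod M)}
    (h : IsTiling M A B) (hA : A.ncard = p * q * r) : B.ncard = p * (q ^ m * r ^ n) := by
  refine Nat.eq_of_mul_eq_mul_left (n := p * q * r) ?_ ?_
  · exact mul_pos (mul_pos hM.prime_p.pos hM.prime_q.pos) hM.prime_r.pos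
  · rw [← hA, h.ncard_mul_ncard, hA, hM.eq_mul]
    ring

theorem p_lt_r_of_gridSeparated [NeZero M] (hM : ThreePrimeModulus M p q r m n)
    {A B : Set (ZMod M)} (h : IsTiling M A B) (hA : A.ncard = p * q * r)
    (hB : GridSeparated M (q ^ m * r ^ (n + 1)) B) : p < r := by
  refine lt_of_le_of_ne ?_ hM.p_ne_r
  have hle : p * (q ^ m * r ^ n) ≤ q ^ m * r ^ (n + 1) := by
    rw [← hM.ncard_right h hA]
    exact hB.ncard_le (dvd_of_mul_left_dvd (hM.mul_dvd le_rfl m.le_succ le_rfl))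
  rw [pow_succ', mul_left_comm _ r] at hle
  exact Nat.le_of_mul_le_mul_right hle
    (mul_pos (pow_pos hM.prime_q.pos m) (pow_pos hM.prime_r.pos n))

end ThreePrimeModulus

/-- The flat corner configuration at `x`: with `ar - x` and `a - aq` of order `q`, and `aq - x` and
`a - ar` of order `r`, the points `x, aq, a, ar` form a quadrilateral all of whose vertices except
possibly `x` lie in `A`. The paper's `a_j`, `a_k` are `aq`, `ar`. -/
structure FlatCorner (M q r : ℕ) (A : Set (ZMod M)) (x a aq ar : ZMod M) : Prop where
  a_mem : a ∈ A
  aq_mem : aq ∈ A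
  ar_mem : ar ∈ A
  gcd_a_sub_aq : Nat.gcd (a - aq).val M = M / q
  gcd_ar_sub_x : Nat.gcd (ar - x).val M = M / q
  gcd_a_sub_ar : Nat.gcd (a - ar).val M = M / r
  gcd_aq_sub_x : Nat.gcd (aq - x).val M = M / r

namespace FlatCorner

variable {M p q r m n : ℕ} {A B : Set (ZMod M)} {x a aq ar a' b : ZMod M}

theorem swap (hc : FlatCorner M q r A x a aq ar) : FlatCorner M r q A x a ar aq :=
  ⟨hc.a_mem, hc.ar_mem, hc.aq_mem, hc.gcd_a_sub_ar, hc.gcd_aq_sub_x, hc.gcd_a_sub_aq,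
    hc.gcd_ar_sub_x⟩

variable [NeZero M]

theorem aq_mem_gridSet (hM : ThreePrimeModulus M p q r m n) (hc : FlatCorner M q r A x a aq ar) :
    aq ∈ gridSet M x (p ^ 2 * q ^ (m + 1) * r ^ n) := by
  simpa only [hc.gcd_aq_sub_x, hM.div_r] using mem_gridSet_gcd x aq

theorem a_mem_gridSet (hM : ThreePrimeModulus M p q r m n) (hc : FlatCorner M q r A x a aq ar) :
    a ∈ gridSet M ar (p ^ 2 * q ^ (m + 1) * r ^ n) := by
  simpa only [hc.gcd_a_sub_ar, hM.div_r] using mem_gridSet_gcd ar a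

theorem aq_notMem_gridSet (hM : ThreePrimeModulus M p q r m n)
    (hc : FlatCorner M q r A x a aq ar) : aq ∉ gridSet M x (r ^ (n + 1)) :=
  notMem_gridSet_of_gcd_eq_div hM.prime_r hM.coprime_mul_r hM.eq_mul hc.gcd_aq_sub_x

theorem a_notMem_gridSet (hM : ThreePrimeModulus M p q r m n)
    (hc : FlatCorner M q r A x a aq ar) : a ∉ gridSet M ar (r ^ (n + 1)) :=
  notMem_gridSet_of_gcd_eq_div hM.prime_r hM.coprime_mul_r hM.eq_mul hc.gcd_a_sub_ar

theorem saturatingSet_subset_union (hM : ThreePrimeModulus M p q r m n) (h : IsTiling M A B)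
    (hc : FlatCorner M q r A x a aq ar) (hb : b ∈ B) :
    saturatingSet A B x b ⊆ gridSet M x (r ^ (n + 1)) ∪ gridSet M aq (r ^ (n + 1)) :=
  _root_.saturatingSet_subset_union hM.prime_r hM.coprime_mul_r hM.eq_mul h hb hc.aq_mem
    (hc.aq_mem_gridSet hM)

theorem saturatingSet_subset_gridSet_pow (hM : ThreePrimeModulus M p q r m n)
    (h : IsTiling M A B) (hc : FlatCorner M q r A x a aq ar) (hb : b ∈ B) :
    saturatingSet A B x b ⊆ gridSet M x (r ^ n) :=
  _root_.saturatingSet_subset_gridSet_pow hM.prime_r hM.coprime_mul_r hM.eq_mul h hb hc.aq_mem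
    (hc.aq_mem_gridSet hM)

theorem saturatingSet_subset_gridSet_mul_pow (hM : ThreePrimeModulus M p q r m n)
    (h : IsTiling M A B) (hc : FlatCorner M q r A x a aq ar) (hb : b ∈ B) :
    saturatingSet A B x b ⊆ gridSet M x (q ^ m * r ^ n) := fun _ ha' =>
  hM.mem_gridSet_mul_pow m.le_succ n.le_succ
    (hc.swap.saturatingSet_subset_gridSet_pow hM.swap h hb ha')
    (hc.saturatingSet_subset_gridSet_pow hM h hb ha')

theorem notMem_gridSet_p (hM : ThreePrimeModulus M p q r m n) (h : IsTiling M A B)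
    (hB : GridSeparated M (p * (q ^ m * r ^ n)) B) (hc : FlatCorner M q r A x a aq ar)
    (hx : x ∉ A) (hb : b ∈ B) (ha' : a' ∈ saturatingSet A B x b) : a' ∉ gridSet M x p := by
  intro hp
  exact notMem_gridSet_of_mem_saturatingSet hM.p_mul_dvd hB hx hb ha' <|
    mem_gridSet_mul hM.p_mul_dvd (hM.coprime_p_mul m n) hp
      (hc.saturatingSet_subset_gridSet_mul_pow hM h hb ha')

theorem mem_gridSet_aq (hM : ThreePrimeModulus M p q r m n) (h : IsTiling M A B)
    (hc : FlatCorner M q r A x a aq ar) (hb : b ∈ B) (ha' : a' ∈ saturatingSet A B x b)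
    (hoff : a' ∉ gridSet M x (r ^ (n + 1))) : a' ∈ gridSet M aq (q ^ m * r ^ (n + 1)) := by
  have haq : aq ∈ gridSet M x (q ^ m) := gridSet_subset_of_dvd
    (((pow_dvd_pow q m.le_succ).mul_left _).mul_right _) (hc.aq_mem_gridSet hM)
  exact hM.mem_gridSet_mul_pow m.le_succ le_rfl
    (mem_gridSet_trans (hc.swap.saturatingSet_subset_gridSet_pow hM.swap h hb ha')
      (mem_gridSet_comm.1 haq))
    ((hc.saturatingSet_subset_union hM h hb ha').resolve_left hoff)

theorem mem_gridSet_aq_iff_notMem_gridSet_a (hM : ThreePrimeModulus M p q r m n)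
    (h : IsTiling M A B) (hc : FlatCorner M q r A x a aq ar) (hb : b ∈ B)
    (ha' : a' ∈ saturatingSet A B x b) :
    a' ∈ gridSet M aq (q ^ (m + 1)) ↔ a' ∉ gridSet M a (q ^ (m + 1)) := by
  have hdvd : q ^ (m + 1) ∣ p ^ 2 * q ^ (m + 1) * r ^ n := (dvd_mul_left _ _).mul_right _
  constructor
  · intro haq ha
    exact hc.swap.a_notMem_gridSet hM.swap (mem_gridSet_trans (mem_gridSet_comm.1 ha) haq)
  · intro ha
    rcases hc.swap.saturatingSet_subset_union hM.swap h hb ha' with hx | har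
    · exact mem_gridSet_trans hx
        (mem_gridSet_comm.1 (gridSet_subset_of_dvd hdvd (hc.aq_mem_gridSet hM)))
    · exact absurd (mem_gridSet_trans har
        (mem_gridSet_comm.1 (gridSet_subset_of_dvd hdvd (hc.a_mem_gridSet hM)))) ha

theorem exists_mem_and_gcd_sub_eq (hM : ThreePrimeModulus M p q r m n) (h : IsTiling M A B)
    (hc : FlatCorner M q r A x a aq ar) (hb : b ∈ B) (ha' : a' ∈ saturatingSet A B x b)
    (hp : a' ∉ gridSet M x p) (hoff : a' ∉ gridSet M x (r ^ (n + 1))) {y z : ZMod M}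
    (hyz : y ∈ gridSet M z (q ^ m * r ^ (n + 1))) (hyzp : y ∉ gridSet M z p) :
    ∃ c ∈ A, a' ∉ gridSet M c p ∧ Nat.gcd (a' - c).val M = Nat.gcd (y - z).val M := by
  have haqx : aq ∈ gridSet M x p := gridSet_subset_of_dvd
    (((dvd_pow_self p two_ne_zero).mul_right _).mul_right _) (hc.aq_mem_gridSet hM)
  have ha_aq : a ∈ gridSet M aq (p ^ 2 * r ^ (n + 1) * q ^ m) := hc.swap.a_mem_gridSet hM.swap
  have haaqp : a ∈ gridSet M aq p := gridSet_subset_of_dvd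
    (((dvd_pow_self p two_ne_zero).mul_right _).mul_right _) ha_aq
  have haq : a' ∈ gridSet M aq (q ^ m * r ^ (n + 1)) := hc.mem_gridSet_aq hM h hb ha' hoff
  have ha : a' ∈ gridSet M a (q ^ m * r ^ (n + 1)) := mem_gridSet_trans haq <|
    mem_gridSet_comm.1 <| gridSet_subset_of_dvd ⟨p ^ 2, by ring⟩ ha_aq
  have haqp : a' ∉ gridSet M aq p := fun hmem => hp (mem_gridSet_trans hmem haqx)
  have hap : a' ∉ gridSet M a p := fun hmem => haqp (mem_gridSet_trans hmem haaqp)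
  have hiff := hc.mem_gridSet_aq_iff_notMem_gridSet_a hM h hb ha'
  by_cases hq : a' ∈ gridSet M aq (q ^ (m + 1)) ↔ y ∈ gridSet M z (q ^ (m + 1))
  · exact ⟨aq, hc.aq_mem, haqp, hM.gcd_val_sub_eq haq haqp hyz hyzp hq⟩
  · exact ⟨a, hc.a_mem, hap, hM.gcd_val_sub_eq ha hap hyz hyzp (by tauto)⟩

theorem gridSeparated_of_notMem (hM : ThreePrimeModulus M p q r m n) (h : IsTiling M A B)
    (hB : GridSeparated M (p * (q ^ m * r ^ n)) B) (hc : FlatCorner M q r A x a aq ar)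
    (hx : x ∉ A) (hb : b ∈ B) (ha' : a' ∈ saturatingSet A B x b)
    (hoff : a' ∉ gridSet M x (r ^ (n + 1))) : GridSeparated M (q ^ m * r ^ (n + 1)) B := by
  intro g hg g' hg' hgg'
  by_cases hgp : g ∈ gridSet M g' p
  · have hE : g ∈ gridSet M g' (q ^ m * r ^ n) :=
      gridSet_subset_of_dvd (mul_dvd_mul_left _ (pow_dvd_pow r n.le_succ)) hgg'
    exact hB g hg g' hg' (mem_gridSet_mul hM.p_mul_dvd (hM.coprime_p_mul m n) hgp hE)
  · obtain ⟨c, hcA, hcp, hgcd⟩ := hc.exists_mem_and_gcd_sub_eq hM h hb ha'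
      (hc.notMem_gridSet_p hM h hB hx hb ha') hoff hgg' hgp
    have hac : a' = c := h.eq_of_gcd_sub_eq ha'.1 hcA hg hg' hgcd
    exact absurd (hac ▸ mem_gridSet_self a' p) hcp

theorem not_gridSeparated (hM : ThreePrimeModulus M p q r m n) (h : IsTiling M A B)
    (hA : A.ncard = p * q * r) (hB : GridSeparated M (p * (q ^ m * r ^ n)) B)
    (hc : FlatCorner M q r A x a aq ar) (hx : x ∉ A) (hb : b ∈ B) :
    ¬ GridSeparated M (q ^ m * r ^ (n + 1)) B := by
  intro hsep
  have hpM : p ∣ M := dvd_of_mul_right_dvd hM.p_mul_dvd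
  have hEM : q ^ m * r ^ n ∣ M := dvd_of_mul_left_dvd hM.p_mul_dvd
  have hrM : r ^ (n + 1) ∣ M := hM.eq_mul ▸ dvd_mul_left _ _
  have hsepM : q ^ m * r ^ (n + 1) ∣ M :=
    dvd_of_mul_left_dvd (hM.mul_dvd le_rfl m.le_succ le_rfl)
  have few : (B ∩ gridSet M b (q ^ m * r ^ n)).ncard < r :=
    ((hB.inter_gridSet hM.p_mul_dvd (hM.coprime_p_mul m n) b).ncard_le hpM).trans_lt
      (hM.p_lt_r_of_gridSeparated h hA hsep)
  obtain ⟨z, hzb, hz⟩ := exists_mem_gridSet_forall_notMem (d := r ^ n) (pow_succ r n ▸ hrM) few b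
  rw [← pow_succ] at hz
  have hbz : b ∉ gridSet M z (r ^ (n + 1)) := hz b ⟨hb, mem_gridSet_self b _⟩
  have haq : x ∈ gridSet M aq (r ^ n) := mem_gridSet_comm.1 <|
    gridSet_subset_of_dvd (dvd_mul_left _ _) (hc.aq_mem_gridSet hM)
  obtain ⟨u, hu⟩ := exists_units_dvd_sub_mul_of_mem_gridSet hM.prime_r hrM haq
    (mt mem_gridSet_comm.1 (hc.aq_notMem_gridSet hM)) (mem_gridSet_comm.1 hzb) hbz
  obtain ⟨a₂, ha₂, b₂, hb₂, hsub⟩ := h.exists_sub_eq_units_mul u x b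
  have hgcd : Nat.gcd (x - a₂).val M = Nat.gcd (b - b₂).val M := by
    rw [hsub, gcd_val_units_mul]
  have ha₂sat : a₂ ∈ saturatingSet A B x b := ⟨ha₂, b₂, hb₂, hgcd⟩
  have hE : a₂ ∈ gridSet M x (q ^ m * r ^ n) :=
    hc.saturatingSet_subset_gridSet_mul_pow hM h hb ha₂sat
  rcases hc.saturatingSet_subset_union hM h hb ha₂sat with hxr | haqr
  · refine notMem_gridSet_of_mem_saturatingSet hsepM hsep hx hb ha₂sat ?_
    exact hM.mem_gridSet_mul_pow m.le_succ le_rfl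
      (gridSet_subset_of_dvd (dvd_mul_right _ _) hE) hxr
  · refine hz b₂ ⟨hb₂, mem_gridSet_comm.1 <|
      (mem_gridSet_iff_of_gcd_eq hEM hgcd).1 (mem_gridSet_comm.1 hE)⟩ ?_
    rw [mem_gridSet_iff] at haqr ⊢
    rw [← u.isUnit.dvd_mul_left]
    have : (u : ZMod M) * (b₂ - z) = (a₂ - aq) - ((x - aq) - u * (b - z)) := by
      linear_combination hsub
    exact this ▸ dvd_sub haqr hu

theorem saturatingSet_subset_gridSet (hM : ThreePrimeModulus M p q r m n) (h : IsTiling M A B)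
    (hA : A.ncard = p * q * r) (hB : GridSeparated M (p * (q ^ m * r ^ n)) B)
    (hc : FlatCorner M q r A x a aq ar) (hx : x ∉ A) (hb : b ∈ B) :
    saturatingSet A B x b ⊆ gridSet M x (r ^ (n + 1)) := by
  intro a' ha'
  by_contra hoff
  exact hc.not_gridSeparated hM h hA hB hx hb
    (hc.gridSeparated_of_notMem hM h hB hx hb ha' hoff)

theorem saturatingSet_subset_line (hM : ThreePrimeModulus M p q r m n) (h : IsTiling M A B)
    (hA : A.ncard = p * q * r) (hB : GridSeparated M (p * (q ^ m * r ^ n)) B)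
    (hc : FlatCorner M q r A x a aq ar) (hx : x ∉ A) (hb : b ∈ B) :
    saturatingSet A B x b ⊆ gridSet M x (M / p ^ 2) := by
  intro a' ha'
  rw [hM.div_p_sq]
  exact hM.mem_gridSet_mul_pow le_rfl le_rfl
    (hc.swap.saturatingSet_subset_gridSet hM.swap h (by rw [hA]; ring)
      (by rwa [mul_comm (r ^ n)]) hx hb ha')
    (hc.saturatingSet_subset_gridSet hM h hA hB hx hb ha')

end FlatCorner

/-- **Flat corner.** Let `M = p_i² p_j^{n_j} p_k^{n_k}`, `A ⊕ B = ℤ_M`,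
`|A| = p_i p_j p_k`, and assume no divisor `m` of `M` with `D(M) | m`, `m ≠ M` lies in
`Div(B)`. If `x ∉ A` and `a, a_j, a_k ∈ A` form a flat corner configuration around `x`, then
for every `b ∈ B` the set `A_{x,b}` lies on the line `ℓ_i(x)`, and consequently the
saturating set `A_x` lies on `ℓ_i(x)`. -/
theorem statement8
    (pi pj pk : ℕ) (hpi : pi.Prime) (hpj : pj.Prime) (hpk : pk.Prime)
    (hij : pi ≠ pj) (hik : pi ≠ pk) (hjk : pj ≠ pk)
    (nj nk : ℕ) (hnj : 1 ≤ nj) (hnk : 1 ≤ nk)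
    (M : ℕ) (hM : M = pi ^ 2 * pj ^ nj * pk ^ nk)
    (A B : Finset (ZMod M))
    (htile : IsTiling M (A : Set (ZMod M)) (B : Set (ZMod M)))
    (hcardA : A.card = pi * pj * pk)
    (hdiv : ∀ m : ℕ, (pi * pj ^ (nj - 1) * pk ^ (nk - 1)) ∣ m → m ∣ M → m ≠ M →
      m ∉ DivSet M M (B : Set (ZMod M)))
    (x : ZMod M) (hx : x ∉ A)
    (a aj ak : ZMod M) (ha : a ∈ A) (haj : aj ∈ A) (hak : ak ∈ A)
    (h1 : Nat.gcd (a - aj).val M = M / pj)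
    (h2 : Nat.gcd (ak - x).val M = M / pj)
    (h3 : Nat.gcd (a - ak).val M = M / pk)
    (h4 : Nat.gcd (aj - x).val M = M / pk) :
    (∀ b ∈ B,
      {a' : ZMod M | a' ∈ A ∧ ∃ b' ∈ B, Nat.gcd (x - a').val M = Nat.gcd (b - b').val M}
        ⊆ gridSet M x (M / pi ^ 2)) ∧
    {a' : ZMod M | a' ∈ A ∧ Nat.gcd (x - a').val M ∈ DivSet M M (B : Set (ZMod M))}
      ⊆ gridSet M x (M / pi ^ 2) := by
  obtain ⟨m, rfl⟩ : ∃ m, nj = m + 1 := ⟨nj - 1, by omega⟩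
  obtain ⟨n, rfl⟩ : ∃ n, nk = n + 1 := ⟨nk - 1, by omega⟩
  have modulus : ThreePrimeModulus M pi pj pk m n := ⟨hpi, hpj, hpk, hij, hik, hjk, hM⟩
  have : NeZero M := ⟨modulus.ne_zero⟩
  have corner : FlatCorner M pj pk (A : Set (ZMod M)) x a aj ak :=
    ⟨ha, haj, hak, h1, h2, h3, h4⟩
  have separated : GridSeparated M (pi * (pj ^ m * pk ^ n)) (B : Set (ZMod M)) :=
    gridSeparated_of_forall_notMem_divSet modulus.p_mul_dvd (by rwa [← mul_assoc])
  have line : ∀ b ∈ B, saturatingSet (A : Set (ZMod M)) B x b ⊆ gridSet M x (M / pi ^ 2) :=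
    fun b hb => corner.saturatingSet_subset_line modulus htile
      (by rw [Set.ncard_coe_finset, hcardA]) separated hx hb
  refine ⟨line, ?_⟩
  rintro a' ⟨ha', b, hb, b', hb', hgcd⟩
  exact line b hb ⟨ha', b', hb', hgcd.symm⟩
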